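/- Let J⊂K with J≠K and U_J≠∅ be given and suppose one of the hypotheses (b), (d1b), (J) is satisfied. Then there exists an open neighbourhood N_J of X_{fJ} in X_f such that R^J defines a diffeomorphism R_J from N_J onto the open subset R^J(N_J) of X_0, with (R_J)^{-1}(χ) = χ + Y_J(Lχ)·f((R_J)^{-1}(χ)) for every χ∈R^J(N_J); moreover N_J = {χ + Y_J(Lχ)·f((R_J)^{-1}(χ)) : χ∈R^J(N_J)} is an almost graph over X_0. -/

import Mathlib

set_option linter.unusedSectionVars false

open Set

noncomputable section

/-- The compact interval `[-r,0]`. -/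
abbrev Icc0 (r : ℝ) : Set ℝ := Set.Icc (-r) 0

/-- Extension of a continuous map on `[-r,0]` to `ℝ`, by the value `0` outside. -/
def extFun {r : ℝ} {E : Type*} [TopologicalSpace E] [Zero E] (φ : C(Icc0 r, E)) : ℝ → E :=
  fun t => if h : t ∈ Icc0 r then φ ⟨t, h⟩ else 0

section extlemmas

variable {r : ℝ} {E : Type*} [NormedAddCommGroup E] [NormedSpace ℝ E]

lemma extFun_add (φ ψ : C(Icc0 r, E)) : extFun (φ + ψ) = extFun φ + extFun ψ := by
  funext t; by_cases h : t ∈ Icc0 r <;> simp [extFun, h]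

lemma extFun_zero : extFun (0 : C(Icc0 r, E)) = 0 := by
  funext t; by_cases h : t ∈ Icc0 r <;> simp [extFun, h]

lemma extFun_smul (c : ℝ) (φ : C(Icc0 r, E)) : extFun (c • φ) = c • extFun φ := by
  funext t; by_cases h : t ∈ Icc0 r <;> simp [extFun, h]

end extlemmas

/-- The space `C¹([-r,0],E)`, realized as the closed subspace of pairs `(φ, φ')` in
`C([-r,0],E) × C([-r,0],E)` such that `φ` is differentiable on `[-r,0]` with derivative `φ'`. -/
def C1sub (r : ℝ) (E : Type*) [NormedAddCommGroup E] [NormedSpace ℝ E] :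
    Submodule ℝ (C(Icc0 r, E) × C(Icc0 r, E)) where
  carrier := {p | ∀ t ∈ Icc0 r, HasDerivWithinAt (extFun p.1) (extFun p.2 t) (Icc0 r) t}
  add_mem' := by
    intro p q hp hq t ht
    have h := (hp t ht).add (hq t ht)
    have e1 : extFun (p + q).1 = fun s => extFun p.1 s + extFun q.1 s := by
      simp [Prod.fst_add, extFun_add]; rfl
    have e2 : extFun (p + q).2 t = extFun p.2 t + extFun q.2 t := by
      simp [Prod.snd_add, extFun_add]
    rw [e1, e2]; exact h
  zero_mem' := by
    intro t ht
    have e1 : extFun (0 : C(Icc0 r, E) × C(Icc0 r, E)).1 = fun _ : ℝ => (0 : E) := by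
      simp [extFun_zero]; rfl
    have e2 : extFun (0 : C(Icc0 r, E) × C(Icc0 r, E)).2 t = 0 := by
      simp [extFun_zero]
    rw [e1, e2]; exact hasDerivWithinAt_const _ _ _
  smul_mem' := by
    intro c p hp t ht
    have h := (hp t ht).const_smul c
    have e1 : extFun (c • p).1 = fun s => c • extFun p.1 s := by
      simp [Prod.smul_fst, extFun_smul]; rfl
    have e2 : extFun (c • p).2 t = c • extFun p.2 t := by
      simp [Prod.smul_snd, extFun_smul]
    rw [e1, e2]; exact h

/-- The Banach space `C¹([-r,0],E)`. -/
abbrev C1 (r : ℝ) (E : Type*) [NormedAddCommGroup E] [NormedSpace ℝ E] := ↥(C1sub r E)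

section C1ops

variable {r : ℝ} {E : Type*} [NormedAddCommGroup E] [NormedSpace ℝ E]

/-- Evaluation `φ(t)` of `φ ∈ C¹([-r,0],E)` (extended by `0` outside `[-r,0]`). -/
def evC (φ : C1 r E) (t : ℝ) : E := extFun φ.1.1 t

/-- Evaluation `φ'(t)` of the derivative of `φ ∈ C¹([-r,0],E)`. -/
def dvC (φ : C1 r E) (t : ℝ) : E := extFun φ.1.2 t

end C1ops

/-- The continuous linear map `ℝ → (Fin n → ℝ)` sending `x` to the vector `x·e_ν`. -/
def sCLM (n : ℕ) (ν : Fin n) : ℝ →L[ℝ] (Fin n → ℝ) :=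
  ContinuousLinearMap.pi (fun j => if j = ν then ContinuousLinearMap.id ℝ ℝ else 0)

/-- `ψ · e_ν` for a continuous map `ψ`. -/
def CMsingle {r : ℝ} {n : ℕ} (ν : Fin n) (φ : C(Icc0 r, ℝ)) : C(Icc0 r, Fin n → ℝ) :=
  ⟨fun t => sCLM n ν (φ t), (sCLM n ν).continuous.comp φ.continuous⟩

lemma extFun_CMsingle {r : ℝ} {n : ℕ} (ν : Fin n) (φ : C(Icc0 r, ℝ)) (t : ℝ) :
    extFun (CMsingle ν φ) t = sCLM n ν (extFun φ t) := by
  by_cases h : t ∈ Icc0 r <;> simp [extFun, CMsingle, h]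

/-- `ψ · e_ν ∈ C¹([-r,0],ℝⁿ)` for a scalar function `ψ ∈ C¹([-r,0],ℝ)`. -/
def singleC1 {r : ℝ} {n : ℕ} (ν : Fin n) (φ : C1 r ℝ) : C1 r (Fin n → ℝ) :=
  ⟨(CMsingle ν φ.1.1, CMsingle ν φ.1.2), by
    intro t ht
    have h := ((sCLM n ν).hasFDerivAt).comp_hasDerivWithinAt t (φ.2 t ht)
    have e1 : extFun (CMsingle ν φ.1.1) = (sCLM n ν) ∘ (extFun φ.1.1) := by
      funext s; exact extFun_CMsingle ν φ.1.1 s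
    rw [show (CMsingle ν φ.1.1, CMsingle ν φ.1.2).1 = CMsingle ν φ.1.1 from rfl,
      show (CMsingle ν φ.1.1, CMsingle ν φ.1.2).2 = CMsingle ν φ.1.2 from rfl,
      e1, extFun_CMsingle]
    exact h⟩

/-- The linear map `ℝⁿ → C¹([-r,0],ℝⁿ)`, `x ↦ Σ_ν x_ν ψ_ν · e_ν` (the map `Y·x`). -/
def Ymap {r : ℝ} {n : ℕ} (ψ : Fin n → C1 r ℝ) : (Fin n → ℝ) →ₗ[ℝ] C1 r (Fin n → ℝ) where
  toFun x := ∑ ν, x ν • singleC1 ν (ψ ν)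
  map_add' x y := by simp [add_smul, Finset.sum_add_distrib]
  map_smul' c x := by simp [smul_smul, Finset.smul_sum]

/-- The closed subspace `X₀ = {φ ∈ C¹ : φ'(0) = 0}`. -/
def X0sub (r : ℝ) (n : ℕ) : Submodule ℝ (C1 r (Fin n → ℝ)) where
  carrier := {φ | dvC φ 0 = 0}
  add_mem' := by
    intro φ ψ hφ hψ
    have : dvC (φ + ψ) 0 = dvC φ 0 + dvC ψ 0 := by
      simp [dvC, extFun_add]
    rw [Set.mem_setOf_eq] at *
    rw [this, hφ, hψ, add_zero]
  zero_mem' := by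
    show dvC (0 : C1 r (Fin n → ℝ)) 0 = 0
    simp [dvC, extFun_zero]
  smul_mem' := by
    intro c φ hφ
    have : dvC (c • φ) 0 = c • dvC φ 0 := by simp [dvC, extFun_smul]
    rw [Set.mem_setOf_eq] at *
    rw [this, hφ, smul_zero]

/-- The projection-like map `R φ = φ − Y·φ'(0)`. -/
def RKmap {r : ℝ} {n : ℕ} (ψ : Fin n → C1 r ℝ) (φ : C1 r (Fin n → ℝ)) : C1 r (Fin n → ℝ) :=
  φ - Ymap ψ (dvC φ 0)

section diffeos

variable {E : Type*} [NormedAddCommGroup E] [NormedSpace ℝ E]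
variable {E' : Type*} [NormedAddCommGroup E'] [NormedSpace ℝ E']

/-- `f` defines a `C¹`-diffeomorphism from `s` onto `t`: `f` is continuously differentiable
on `s`, injective on `s`, maps `s` onto `t`, and has a continuously differentiable inverse. -/
def IsC1DiffeoOn (f : E → E') (s : Set E) (t : Set E') : Prop :=
  ContDiffOn ℝ 1 f s ∧ Set.InjOn f s ∧ f '' s = t ∧
    ∃ g : E' → E, ContDiffOn ℝ 1 g t ∧ Set.InvOn g f s t

/-- The tangent cone of `X ⊆ E` at `x`: all velocities `c'(0)` of continuously differentiable
curves in `X` through `x`. -/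
def tangentSet (X : Set E) (x : E) : Set E :=
  {v | ∃ (c : ℝ → E) (ε : ℝ), 0 < ε ∧ ContDiffOn ℝ 1 c (Set.Ioo (-ε) ε) ∧
      (∀ s ∈ Set.Ioo (-ε) ε, c s ∈ X) ∧ c 0 = x ∧ HasDerivWithinAt c v (Set.Ioo (-ε) ε) 0}

/-- `X` is a continuously differentiable submanifold of codimension `m` of `E`. -/
def IsC1SubmanifoldCodim (X : Set E) (m : ℕ) : Prop :=
  ∀ x ∈ X, ∃ (O : Set E) (Φ : E → E) (H Q : Submodule ℝ E),
    IsOpen O ∧ x ∈ O ∧ IsClosed (H : Set E) ∧ IsCompl H Q ∧ Module.finrank ℝ Q = m ∧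
    IsOpen (Φ '' O) ∧ IsC1DiffeoOn Φ O (Φ '' O) ∧ Φ '' (X ∩ O) = (H : Set E) ∩ (Φ '' O)

/-- `X` is a continuously differentiable submanifold of `E`. -/
def IsC1Submanifold (X : Set E) : Prop :=
  ∀ x ∈ X, ∃ (O : Set E) (Φ : E → E) (H : Submodule ℝ E),
    IsOpen O ∧ x ∈ O ∧ IsClosed (H : Set E) ∧
    IsOpen (Φ '' O) ∧ IsC1DiffeoOn Φ O (Φ '' O) ∧ Φ '' (X ∩ O) = (H : Set E) ∩ (Φ '' O)

/-- `A` is an almost graph over `H`. -/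
def IsAlmostGraphOver (A : Set E) (H : Set E) : Prop :=
  ∃ (dm : Set E) (α : E → E), dm ⊆ H ∧ ContDiffOn ℝ 1 α dm ∧
    (∀ ζ ∈ dm ∩ A, α ζ = 0) ∧ (∀ ζ ∈ dm \ A, α ζ ∉ H) ∧
    IsC1DiffeoOn (fun ζ => ζ + α ζ) dm A

end diffeos

/-- The data of the delay differential system
`x'(t) = g(x(t-d_1(Lx_t)),…,x(t-d_kk(Lx_t)))`. -/
structure Setting (r : ℝ) (n kk : ℕ) (F : Type*) [NormedAddCommGroup F] [NormedSpace ℝ F] where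
  /-- The continuous linear map `L : C([-r,0],ℝⁿ) → F`. -/
  L : C(Icc0 r, Fin n → ℝ) →L[ℝ] F
  /-- The open set `W ⊆ F`. -/
  W : Set F
  Wopen : IsOpen W
  /-- The delay functions `d_k : W → [0,r]`. -/
  d : Fin kk → F → ℝ
  d_smooth : ∀ k, ContDiffOn ℝ 1 (d k) W
  d_mem : ∀ k, ∀ w ∈ W, d k w ∈ Set.Icc (0:ℝ) r
  /-- The open set `V ⊆ (ℝⁿ)^kk`. -/
  V : Set (Fin kk → Fin n → ℝ)
  Vopen : IsOpen V
  /-- The right hand side function `g : V → ℝⁿ`. -/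
  g : (Fin kk → Fin n → ℝ) → Fin n → ℝ
  g_smooth : ContDiffOn ℝ 1 g V

namespace Setting

variable {r : ℝ} {n kk : ℕ} {F : Type*} [NormedAddCommGroup F] [NormedSpace ℝ F]
variable (S : Setting r n kk F)

/-- `L` applied to (the `C⁰`-part of) `φ ∈ C¹`. -/
def Lof (φ : C1 r (Fin n → ℝ)) : F := S.L φ.1.1

/-- `φ̂ = (φ(-d_1(Lφ)),…,φ(-d_kk(Lφ)))`. -/
def hat (φ : C1 r (Fin n → ℝ)) : Fin kk → Fin n → ℝ := fun k => evC φ (-(S.d k (S.Lof φ)))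

/-- The domain `U = {φ ∈ C¹ : Lφ ∈ W, φ̂ ∈ V}`. -/
def U : Set (C1 r (Fin n → ℝ)) := {φ | S.Lof φ ∈ S.W ∧ S.hat φ ∈ S.V}

/-- The right hand side `f(φ) = g(φ̂)`. -/
def fmap (φ : C1 r (Fin n → ℝ)) : Fin n → ℝ := S.g (S.hat φ)

/-- The solution manifold `X_f = {φ ∈ U : φ'(0) = f(φ)}`. -/
def Xf : Set (C1 r (Fin n → ℝ)) := {φ | φ ∈ S.U ∧ dvC φ 0 = S.fmap φ}

/-- `W_J = {w ∈ W : d_j(w)=0 for j∈J, d_k(w)>0 for k∉J}`. -/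
def WJ (J : Finset (Fin kk)) : Set F :=
  {w | w ∈ S.W ∧ (∀ j ∈ J, S.d j w = 0) ∧ ∀ k ∉ J, 0 < S.d k w}

/-- `W^J = {w ∈ W : d_k(w)>0 for k∉J}`. -/
def WupJ (J : Finset (Fin kk)) : Set F :=
  {w | w ∈ S.W ∧ ∀ k ∉ J, 0 < S.d k w}

/-- `U_J = U ∩ L⁻¹(W_J)`. -/
def UJ (J : Finset (Fin kk)) : Set (C1 r (Fin n → ℝ)) := {φ | φ ∈ S.U ∧ S.Lof φ ∈ S.WJ J}

/-- `U^J = U ∩ L⁻¹(W^J)`. -/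
def UupJ (J : Finset (Fin kk)) : Set (C1 r (Fin n → ℝ)) := {φ | φ ∈ S.U ∧ S.Lof φ ∈ S.WupJ J}

/-- `X_{fJ} = X_f ∩ U_J`. -/
def XfJ (J : Finset (Fin kk)) : Set (C1 r (Fin n → ℝ)) := S.Xf ∩ S.UJ J

/-- Hypothesis (b): `g` is bounded. -/
def HypB : Prop := ∃ M, ∀ v ∈ S.V, ‖S.g v‖ ≤ M

/-- Hypothesis (d1b): `d₁ = 0` on `W` and `g` is bounded on subsets of `V` with bounded
first component. -/
def HypD1B (hk : 0 < kk) : Prop :=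
  (∀ w ∈ S.W, S.d ⟨0, hk⟩ w = 0) ∧
  ∀ B : Set (Fin n → ℝ), Bornology.IsBounded B →
    Bornology.IsBounded (S.g '' {v | v ∈ S.V ∧ v ⟨0, hk⟩ ∈ B})

/-- The partial derivative `∂_{(k-1)n+ν} g_μ (φ̂)`. -/
def dgCoeff (φ : C1 r (Fin n → ℝ)) (k : Fin kk) (ν : Fin n) (μ : Fin n) : ℝ :=
  fderivWithin ℝ S.g S.V (S.hat φ) (Pi.single k (Pi.single ν 1)) μ

/-- The right hand side of the formula for `Df_μ(φ)χ`. -/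
def dFormula (φ χ : C1 r (Fin n → ℝ)) (μ : Fin n) : ℝ :=
  ∑ k, ∑ ν, S.dgCoeff φ k ν μ *
    (evC χ (-(S.d k (S.Lof φ))) ν -
      dvC φ (-(S.d k (S.Lof φ))) ν * fderivWithin ℝ (S.d k) S.W (S.Lof φ) (S.Lof χ))

/-- The map `R^J(φ) = φ − Y_J(Lφ)·φ'(0)` of Section 4 of the paper. -/
def RJmap (y : Fin n → F → C1 r ℝ) (φ : C1 r (Fin n → ℝ)) : C1 r (Fin n → ℝ) :=
  φ - Ymap (fun ν => y ν (S.Lof φ)) (dvC φ 0)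

end Setting

section abstractLemmas

open Metric Topology Filter

variable {E : Type*} [NormedAddCommGroup E] [NormedSpace ℝ E]
variable {P : Type*} [NormedAddCommGroup P] [NormedSpace ℝ P]

lemma aux_exists_fixed [CompleteSpace P] (T : P → P) (c : P)
    (hLip : ∀ x ∈ ball c 1, ∀ x' ∈ ball c 1, ‖T x - T x'‖ ≤ 1 / 2 * ‖x - x'‖)
    (h0 : ‖T c - c‖ ≤ 1 / 4) : ∃ x ∈ ball c 1, T x = x := by
  have hsub : closedBall c (3 / 4) ⊆ ball c 1 := closedBall_subset_ball (by norm_num)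
  have hmaps : MapsTo T (closedBall c (3 / 4)) (closedBall c (3 / 4)) := by
    intro x hx
    have h1 := hLip x (hsub hx) c (mem_ball_self one_pos)
    rw [mem_closedBall, dist_eq_norm] at hx ⊢
    calc ‖T x - c‖ = ‖(T x - T c) + (T c - c)‖ := by abel_nf
      _ ≤ ‖T x - T c‖ + ‖T c - c‖ := norm_add_le _ _
      _ ≤ 3 / 4 := by linarith
  have hcon : ContractingWith (1 / 2) (hmaps.restrict T _ _) := by
    refine ⟨by rw [← NNReal.coe_lt_coe]; norm_num, LipschitzWith.of_dist_le_mul ?_⟩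
    rintro ⟨x, hx⟩ ⟨x', hx'⟩
    have := hLip x (hsub hx) x' (hsub hx')
    simpa [Subtype.dist_eq, dist_eq_norm] using this
  obtain ⟨z, hz, hfix, -⟩ := ContractingWith.exists_fixedPoint'
    (isClosed_closedBall.isComplete) hmaps hcon (x := c)
    (mem_closedBall_self (by norm_num)) (edist_ne_top _ _)
  exact ⟨z, hsub hz, hfix⟩

lemma aux_fixed_smooth [CompleteSpace E] [CompleteSpace P]
    (T : E × P → P) (c : E → P) (D : Set (E × P)) (Ω : Set E)
    (hD : IsOpen D) (hΩ : IsOpen Ω) (hT : ContDiffOn ℝ 1 T D) (hc : ContinuousOn c Ω)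
    (hmem : ∀ χ ∈ Ω, ∀ x ∈ ball (c χ) 1, (χ, x) ∈ D)
    (hLip : ∀ χ ∈ Ω, ∀ x ∈ ball (c χ) 1, ∀ x' ∈ ball (c χ) 1,
      ‖T (χ, x) - T (χ, x')‖ ≤ 1 / 2 * ‖x - x'‖)
    (h0 : ∀ χ ∈ Ω, ‖T (χ, c χ) - c χ‖ ≤ 1 / 4) :
    ∃ X : E → P, ContDiffOn ℝ 1 X Ω ∧ ∀ χ ∈ Ω, X χ ∈ ball (c χ) 1 ∧ T (χ, X χ) = X χ := by
  have hex : ∀ χ, ∃ x, χ ∈ Ω → x ∈ ball (c χ) 1 ∧ T (χ, x) = x := by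
    intro χ
    by_cases h : χ ∈ Ω
    · obtain ⟨x, hx, hx'⟩ := aux_exists_fixed (fun x => T (χ, x)) (c χ) (hLip χ h) (h0 χ h)
      exact ⟨x, fun _ => ⟨hx, hx'⟩⟩
    · exact ⟨0, fun h' => absurd h' h⟩
  choose X hX using hex
  refine ⟨X, ?_, hX⟩
  intro χ hχ
  apply ContDiffAt.contDiffWithinAt
  obtain ⟨hb, hfix⟩ := hX χ hχ
  set u : E × P := (χ, X χ) with hu
  have huD : u ∈ D := hmem χ hχ _ hb
  have hTu : ContDiffAt ℝ 1 T u := (hT u huD).contDiffAt (hD.mem_nhds huD)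
  have hG : ContDiffAt ℝ 1 (fun p : E × P => p.2 - T p) u := contDiffAt_snd.sub hTu
  have hTd : HasFDerivAt T (fderiv ℝ T u) u := (hTu.differentiableAt (by norm_num)).hasFDerivAt
  have hGd : HasFDerivAt (fun p : E × P => p.2 - T p)
      (ContinuousLinearMap.snd ℝ E P - fderiv ℝ T u) u := hasFDerivAt_snd.sub hTd
  set A : P →L[ℝ] P := fderiv ℝ T u ∘L .inr ℝ E P with hA
  have hAd : HasFDerivAt (fun x => T (χ, x)) A (X χ) :=
    HasFDerivAt.comp (X χ) (show HasFDerivAt T (fderiv ℝ T u) (χ, X χ) from hTd)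
      (hasFDerivAt_prodMk_right χ (X χ))
  have hAn : ‖A‖ ≤ 1 / 2 := by
    refine hAd.le_of_lip' (by norm_num) ?_
    filter_upwards [isOpen_ball.mem_nhds hb] with x hx
    exact hLip χ hχ x hx _ hb
  have hinv : (fderiv ℝ (fun p : E × P => p.2 - T p) u ∘L .inr ℝ E P).IsInvertible := by
    have e : fderiv ℝ (fun p : E × P => p.2 - T p) u ∘L .inr ℝ E P = 1 - A := by
      rw [hGd.fderiv]; ext x; simp [A]
    rw [e]
    obtain ⟨v, hv⟩ := isUnit_one_sub_of_norm_lt_one (show ‖A‖ < 1 by linarith)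
    exact ⟨ContinuousLinearEquiv.unitsEquiv ℝ P v, by rw [← hv]; rfl⟩
  have hψ := hG.contDiffAt_implicitFunction one_ne_zero hinv
  have hψ0 := hG.implicitFunction_apply_self one_ne_zero hinv
  have hψe := hG.eventually_apply_implicitFunction one_ne_zero hinv
  set ψ := hG.implicitFunction one_ne_zero hinv
  simp only [hu] at hψ hψ0 hψe
  refine hψ.congr_of_eventuallyEq ?_
  have hcc : ContinuousAt c χ := hc.continuousAt (hΩ.mem_nhds hχ)
  have hnear : ∀ᶠ χ' in 𝓝 χ, ‖ψ χ' - c χ'‖ < 1 := by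
    have : ContinuousAt (fun χ' => ‖ψ χ' - c χ'‖) χ := (hψ.continuousAt.sub hcc).norm
    apply this.eventually_lt_const
    beta_reduce
    rw [hψ0]
    simpa [dist_eq_norm] using hb
  filter_upwards [hψe, hnear, hΩ.mem_nhds hχ] with χ' h1 h2 h3
  have h4 : T (χ', ψ χ') = ψ χ' := by
    rw [hfix, sub_self, sub_eq_zero] at h1; exact h1.symm
  obtain ⟨h5, h6⟩ := hX χ' h3
  have := hLip χ' h3 (X χ') h5 (ψ χ') (by rwa [mem_ball, dist_eq_norm])
  rw [h4, h6] at this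
  have h7 : ‖X χ' - ψ χ'‖ = 0 := le_antisymm (by linarith) (norm_nonneg _)
  exact sub_eq_zero.1 (norm_eq_zero.1 h7)

/-- Near a point where the fibre map is constant, the fibre map is a contraction. -/
lemma aux_good_nhds [ProperSpace P] (T : E × P → P) (c : E → P) (D : Set (E × P))
    (hD : IsOpen D) (hT : ContDiffOn ℝ 1 T D) (χ₀ : E) (hc : ContinuousAt c χ₀)
    (hmem : ∀ x, (χ₀, x) ∈ D) (hconst : ∀ x, T (χ₀, x) = c χ₀) :
    ∀ᶠ χ in 𝓝 χ₀, (∀ x ∈ ball (c χ) 1, (χ, x) ∈ D) ∧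
      (∀ x ∈ ball (c χ) 1, ∀ x' ∈ ball (c χ) 1,
        ‖T (χ, x) - T (χ, x')‖ ≤ 1 / 2 * ‖x - x'‖) ∧
      ‖T (χ, c χ) - c χ‖ ≤ 1 / 4 := by
  have hTd : ∀ p ∈ D, HasFDerivAt T (fderiv ℝ T p) p := fun p hp =>
    (((hT p hp).contDiffAt (hD.mem_nhds hp)).differentiableAt (by norm_num)).hasFDerivAt
  have hAd : ∀ χ x, (χ, x) ∈ D →
      HasFDerivAt (fun x => T (χ, x)) (fderiv ℝ T (χ, x) ∘L .inr ℝ E P) x := fun χ x h =>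
    HasFDerivAt.comp x (hTd _ h) (hasFDerivAt_prodMk_right χ x)
  have hcont : ContinuousOn (fun p => ‖fderiv ℝ T p ∘L .inr ℝ E P‖) D := by
    have h1 : ContinuousOn (fderiv ℝ T) D := hT.continuousOn_fderiv_of_isOpen hD le_rfl
    exact (h1.clm_comp continuousOn_const).norm
  have hM : IsOpen (D ∩ (fun p => ‖fderiv ℝ T p ∘L .inr ℝ E P‖) ⁻¹' Iio (1 / 2)) :=
    hcont.isOpen_inter_preimage hD isOpen_Iio
  obtain ⟨u, v, hu, hv, hχu, hbv, huv⟩ := generalized_tube_lemma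
    (isCompact_singleton (x := χ₀)) (isCompact_closedBall (c χ₀) 2) hM (by
      rintro ⟨χ, x⟩ ⟨h1, -⟩
      obtain rfl : χ = χ₀ := h1
      refine ⟨hmem x, ?_⟩
      have h2 := hAd χ x (hmem x)
      have h3 : (fun x => T (χ, x)) = fun _ => c χ := funext hconst
      rw [h3] at h2
      have h4 := h2.unique (hasFDerivAt_const _ _)
      simp only [mem_preimage, mem_Iio]
      rw [h4]; simp)
  have hn1 : ∀ᶠ χ in 𝓝 χ₀, dist (c χ) (c χ₀) < 1 := Metric.tendsto_nhds.1 hc 1 one_pos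
  have hn2 : ∀ᶠ χ in 𝓝 χ₀, ‖T (χ, c χ) - c χ‖ < 1 / 4 := by
    have h1 : ContinuousAt T (χ₀, c χ₀) :=
      (hT.continuousOn).continuousAt (hD.mem_nhds (hmem _))
    have h2 : ContinuousAt (fun χ => T (χ, c χ)) χ₀ :=
      ContinuousAt.comp (f := fun χ => (χ, c χ)) h1 (continuousAt_id.prodMk hc)
    have h3 : ContinuousAt (fun χ => ‖T (χ, c χ) - c χ‖) χ₀ := (h2.sub hc).norm
    apply h3.eventually_lt_const
    beta_reduce
    rw [hconst]; simp
  filter_upwards [hn1, hn2, hu.mem_nhds (hχu rfl)] with χ h1 h2 h3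
  have hb : ∀ x ∈ ball (c χ) 1, (χ, x) ∈
      D ∩ (fun p => ‖fderiv ℝ T p ∘L .inr ℝ E P‖) ⁻¹' Iio (1 / 2) := by
    intro x hx
    refine huv ⟨h3, hbv ?_⟩
    rw [mem_closedBall]
    have := dist_triangle x (c χ) (c χ₀)
    rw [mem_ball] at hx
    linarith
  refine ⟨fun x hx => (hb x hx).1, fun x hx x' hx' => ?_, h2.le⟩
  exact (convex_ball (c χ) 1).norm_image_sub_le_of_norm_hasFDerivWithin_le
    (f := fun x => T (χ, x)) (f' := fun x => fderiv ℝ T (χ, x) ∘L .inr ℝ E P)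
    (fun z hz => (hAd χ z (hb z hz).1).hasFDerivWithinAt)
    (fun z hz => (mem_Iio.1 (hb z hz).2).le) hx' hx

end abstractLemmas

section genericEval

open Metric Topology Filter

variable {Z : Type*} [NormedAddCommGroup Z] [NormedSpace ℝ Z]
variable {E : Type*} [NormedAddCommGroup E] [NormedSpace ℝ E]

lemma gen_ev_contDiff {a b : ℝ} (hab : a < b) (ev₀ dv : ℝ → Z →ₗ[ℝ] E)
    (hev : ∀ t z, ‖ev₀ t z‖ ≤ ‖z‖) (hdv : ∀ t z, ‖dv t z‖ ≤ ‖z‖)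
    (hd : ∀ z, ∀ t ∈ Icc a b, HasDerivWithinAt (fun t => ev₀ t z) (dv t z) (Icc a b) t)
    (hdc : ∀ z, ContinuousOn (fun t => dv t z) (Icc a b)) :
    ContDiffOn ℝ 1 (fun p : Z × ℝ => ev₀ p.2 p.1) (univ ×ˢ Icc a b) := by
  let ev : ℝ → Z →L[ℝ] E := fun t => (ev₀ t).mkContinuous 1 (fun z => by simpa using hev t z)
  have hevv : ∀ t z, ev₀ t z = ev t z := fun _ _ => rfl
  have hlip : ∀ z, ∀ s ∈ Icc a b, ∀ t ∈ Icc a b, ‖ev t z - ev s z‖ ≤ ‖z‖ * ‖t - s‖ :=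
    fun z s hs t ht => (convex_Icc a b).norm_image_sub_le_of_norm_hasDerivWithin_le
      (f := fun t => ev t z) (f' := fun t => dv t z) (hd z) (fun t _ => hdv t z) hs ht
  have hfd : ∀ z, ∀ t ∈ Icc a b, HasFDerivWithinAt (fun p : Z × ℝ => ev p.2 p.1)
      ((ev t).comp (.fst ℝ Z ℝ) + (ContinuousLinearMap.snd ℝ Z ℝ).smulRight (dv t z))
      (univ ×ˢ Icc a b) (z, t) := by
    intro φ t ht
    have h1 : HasFDerivWithinAt (fun p : Z × ℝ => ev p.2 (p.1 - φ) - ev t (p.1 - φ))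
        (0 : Z × ℝ →L[ℝ] E) (univ ×ˢ Icc a b) (φ, t) := by
      rw [hasFDerivWithinAt_iff_isLittleO, Asymptotics.isLittleO_iff]
      intro c hc
      have : ∀ᶠ p : Z × ℝ in 𝓝[univ ×ˢ Icc a b] (φ, t), ‖p - (φ, t)‖ < c := by
        apply nhdsWithin_le_nhds
        have : ContinuousAt (fun p : Z × ℝ => ‖p - (φ, t)‖) (φ, t) := by fun_prop
        apply this.eventually_lt_const
        simpa using hc
      filter_upwards [this, self_mem_nhdsWithin] with p hp hpm
      have h3 := hlip (p.1 - φ) t ht p.2 hpm.2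
      have h4 : ‖p.1 - φ‖ ≤ ‖p - (φ, t)‖ := norm_fst_le (p - (φ, t))
      have h5 : ‖p.2 - t‖ ≤ ‖p - (φ, t)‖ := norm_snd_le (p - (φ, t))
      simp only [sub_self, sub_zero, _root_.zero_apply]
      exact h3.trans (mul_le_mul (h4.trans hp.le) h5 (norm_nonneg _) hc.le)
    have h2 : HasFDerivWithinAt (fun p : Z × ℝ => ev p.2 φ)
        ((ContinuousLinearMap.snd ℝ Z ℝ).smulRight (dv t φ))
        (univ ×ˢ Icc a b) (φ, t) := by
      have h := (hd φ t ht).hasFDerivWithinAt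
      have h' := HasFDerivWithinAt.comp (f := fun p : Z × ℝ => p.2) (g := fun t => ev t φ)
        (s := univ ×ˢ Icc a b) (t := Icc a b) (φ, t) h hasFDerivWithinAt_snd (fun p hp => hp.2)
      convert! h' using 1
    have h3 : HasFDerivWithinAt (fun p : Z × ℝ => ev t (p.1 - φ))
        ((ev t).comp (.fst ℝ Z ℝ)) (univ ×ˢ Icc a b) (φ, t) :=
      (ev t).hasFDerivAt.comp_hasFDerivWithinAt (φ, t) (hasFDerivWithinAt_fst.sub_const φ)
    have h4 := (h1.add h3).add h2
    rw [zero_add] at h4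
    refine h4.congr_of_eventuallyEq (Eventually.of_forall fun p => ?_) ?_
    · simp
    · simp
  have hu : UniqueDiffOn ℝ ((univ : Set Z) ×ˢ Icc a b) :=
    uniqueDiffOn_univ.prod (uniqueDiffOn_Icc hab)
  rw [show (1 : WithTop ℕ∞) = 0 + 1 from rfl,
    contDiffOn_succ_iff_hasFDerivWithinAt_of_uniqueDiffOn hu]
  refine ⟨by simp, fun p => (ev p.2).comp (.fst ℝ Z ℝ) +
        (ContinuousLinearMap.snd ℝ Z ℝ).smulRight (dv p.2 p.1), ?_,
    fun p hp => hfd p.1 p.2 hp.2⟩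
  rw [contDiffOn_zero]
  have c1 : ContinuousOn (fun t => ev t) (Icc a b) := by
    have : LipschitzOnWith 1 (fun t => ev t) (Icc a b) := by
      refine LipschitzOnWith.of_dist_le_mul fun s hs t ht => ?_
      rw [dist_eq_norm, dist_eq_norm]
      refine ContinuousLinearMap.opNorm_le_bound _ (by positivity) fun φ => ?_
      have := hlip φ t ht s hs
      simpa [mul_comm] using this
    exact this.continuousOn
  have c2 : ContinuousOn (fun p : Z × ℝ => dv p.2 p.1) (univ ×ˢ Icc a b) := by
    rintro ⟨z, t⟩ ⟨-, ht⟩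
    have e1 : ContinuousWithinAt (fun p : Z × ℝ => dv p.2 z) (univ ×ˢ Icc a b) (z, t) :=
      ContinuousWithinAt.comp (f := fun p : Z × ℝ => p.2) (g := fun t => dv t z)
        (t := Icc a b) (hdc z t ht) continuousWithinAt_snd (fun p hp => hp.2)
    have e2 : ContinuousWithinAt (fun p : Z × ℝ => dv p.2 (p.1 - z))
        (univ ×ˢ Icc a b) (z, t) := by
      have e3 : Tendsto (fun p : Z × ℝ => ‖p.1 - z‖) (𝓝[univ ×ˢ Icc a b] (z, t)) (𝓝 0) := by
        have : Continuous (fun p : Z × ℝ => ‖p.1 - z‖) := by fun_prop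
        have h := (this.continuousWithinAt (s := univ ×ˢ Icc a b) (x := (z, t))).tendsto
        simpa using h
      have := squeeze_zero_norm (fun p : Z × ℝ => hdv p.2 (p.1 - z)) e3
      rw [ContinuousWithinAt]
      simpa using this
    have e4 := e1.add e2
    refine e4.congr (fun p _ => ?_) ?_ <;> simp
  refine ContinuousOn.add ?_ ?_
  · exact (c1.comp continuousOn_snd (fun p hp => hp.2)).clm_comp continuousOn_const
  · exact ((ContinuousLinearMap.smulRightL ℝ (Z × ℝ) E
      (ContinuousLinearMap.snd ℝ Z ℝ)).continuous.comp_continuousOn c2)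

lemma gen_sum_smul {ι A : Type*} [Fintype ι] [NormedAddCommGroup A] [NormedSpace ℝ A]
    (a : ι → A → ℝ) (b : ι → A → Z) (s : Set A) (ha : ∀ i, ContDiffOn ℝ 1 (a i) s)
    (hb : ∀ i, ContDiffOn ℝ 1 (b i) s) : ContDiffOn ℝ 1 (fun p => ∑ i, a i p • b i p) s :=
  ContDiffOn.sum (s := Finset.univ) (fun i _ => (ha i).smul (hb i))

end genericEval

section C1lemmas

open Metric Topology Filter

variable {r : ℝ} {E : Type*} [NormedAddCommGroup E] [NormedSpace ℝ E]

lemma extFun_of_mem (φ : C(Icc0 r, E)) {t : ℝ} (h : t ∈ Icc0 r) : extFun φ t = φ ⟨t, h⟩ := by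
  simp [extFun, h]

lemma norm_extFun_le (φ : C(Icc0 r, E)) (t : ℝ) : ‖extFun φ t‖ ≤ ‖φ‖ := by
  by_cases h : t ∈ Icc0 r
  · rw [extFun_of_mem φ h]; exact φ.norm_coe_le_norm _
  · simp [extFun, h]

lemma aux_mem_C1sub_iff [CompleteSpace E] (hr : 0 < r) (p : C(Icc0 r, E) × C(Icc0 r, E)) :
    p ∈ C1sub r E ↔ ∀ t : Icc0 r,
      p.1 t - p.1 ⟨-r, by simp [hr.le]⟩ = ∫ s in (-r)..(t : ℝ),
        p.2 (projIcc (-r) 0 (by linarith) s) := by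
  have hle : -r ≤ 0 := by linarith
  have hcont : Continuous (fun s => p.2 (projIcc (-r) 0 hle s)) :=
    p.2.continuous.comp continuous_projIcc
  have hproj : ∀ s ∈ Icc0 r, extFun p.2 s = p.2 (projIcc (-r) 0 hle s) := by
    intro s hs
    rw [extFun_of_mem _ hs, projIcc_of_mem hle hs]
  have hext : ∀ (t : Icc0 r), extFun p.1 t = p.1 t := fun t => extFun_of_mem _ t.2
  have hl : (-r) ∈ Icc0 r := by simp [hr.le]
  constructor
  · intro hp t
    have h1 := intervalIntegral.integral_eq_sub_of_hasDerivAt_of_le (a := -r) (b := t)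
      (f := extFun p.1) (f' := fun s => p.2 (projIcc (-r) 0 hle s)) t.2.1
      (fun s hs => ((hp s ⟨hs.1, hs.2.trans t.2.2⟩).continuousWithinAt).mono
        (Icc_subset_Icc_right t.2.2))
      (fun s hs => by
        have hs' : s ∈ Icc0 r := ⟨hs.1.le, hs.2.le.trans t.2.2⟩
        have := (hp s hs').hasDerivAt (Icc_mem_nhds hs.1 (hs.2.trans_le t.2.2))
        rwa [hproj s hs'] at this)
      (hcont.intervalIntegrable _ _)
    rw [h1, hext, extFun_of_mem _ hl]
  · intro h t ht
    have h1 : HasDerivAt (fun t => p.1 ⟨-r, hl⟩ + ∫ s in (-r)..t,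
        p.2 (projIcc (-r) 0 hle s)) (p.2 (projIcc (-r) 0 hle t)) t :=
      (intervalIntegral.integral_hasDerivAt_right (hcont.intervalIntegrable _ _)
        (hcont.stronglyMeasurableAtFilter _ _) hcont.continuousAt).const_add _
    rw [hproj t ht]
    refine h1.hasDerivWithinAt.congr ?_ ?_
    · intro s hs
      rw [extFun_of_mem _ hs, ← h ⟨s, hs⟩]; abel
    · rw [extFun_of_mem _ ht, ← h ⟨t, ht⟩]; abel

lemma aux_complete [CompleteSpace E] (hr : 0 < r) : CompleteSpace (C1 r E) := by
  have hle : -r ≤ 0 := by linarith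
  have : IsClosed (C1sub r E : Set (C(Icc0 r, E) × C(Icc0 r, E))) := by
    have e : (C1sub r E : Set (C(Icc0 r, E) × C(Icc0 r, E))) = ⋂ t : Icc0 r,
        {p | p.1 t - p.1 ⟨-r, by simp [hr.le]⟩ = ∫ s in (-r)..(t : ℝ),
        p.2 (projIcc (-r) 0 hle s)} := by
      ext p
      rw [mem_iInter]
      exact aux_mem_C1sub_iff hr p
    rw [e]
    refine isClosed_iInter fun t => isClosed_eq ?_ ?_
    · fun_prop
    · apply intervalIntegral.continuous_parametric_intervalIntegral_of_continuous'
      have : Continuous (fun q : (C(Icc0 r, E) × C(Icc0 r, E)) × ℝ =>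
          q.1.2 (projIcc (-r) 0 hle q.2)) := by
        have h1 : Continuous (fun q : (C(Icc0 r, E) × C(Icc0 r, E)) × ℝ =>
          (projIcc (-r) 0 hle q.2)) := continuous_projIcc.comp continuous_snd
        have h2 : Continuous (fun q : (C(Icc0 r, E) × C(Icc0 r, E)) × ℝ => q.1.2) := by fun_prop
        exact h2.eval h1
      exact this
  exact this.completeSpace_coe

/-- Evaluation as a linear map. -/
def evLM (r : ℝ) (E : Type*) [NormedAddCommGroup E] [NormedSpace ℝ E] (t : ℝ) : C1 r E →ₗ[ℝ] E where
  toFun := fun φ => evC φ t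
  map_add' := fun φ ψ => by simp [evC, extFun_add]
  map_smul' := fun c φ => by simp [evC, extFun_smul]

/-- Evaluation of the derivative as a linear map. -/
def dvLM (r : ℝ) (E : Type*) [NormedAddCommGroup E] [NormedSpace ℝ E] (t : ℝ) : C1 r E →ₗ[ℝ] E where
  toFun := fun φ => dvC φ t
  map_add' := fun φ ψ => by simp [dvC, extFun_add]
  map_smul' := fun c φ => by simp [dvC, extFun_smul]

lemma evLM_apply (t : ℝ) (φ : C1 r E) : evLM r E t φ = evC φ t := rfl
lemma dvLM_apply (t : ℝ) (φ : C1 r E) : dvLM r E t φ = dvC φ t := rfl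

lemma norm_evC_le (φ : C1 r E) (t : ℝ) : ‖evC φ t‖ ≤ ‖φ‖ :=
  (norm_extFun_le _ _).trans (norm_fst_le φ.1)

lemma norm_dvC_le (φ : C1 r E) (t : ℝ) : ‖dvC φ t‖ ≤ ‖φ‖ :=
  (norm_extFun_le _ _).trans (norm_snd_le φ.1)

lemma aux_ev_contDiff (hr : 0 < r) :
    ContDiffOn ℝ 1 (fun p : C1 r E × ℝ => evC p.1 p.2) (univ ×ˢ Icc0 r) := by
  have hd : ∀ φ : C1 r E, ∀ t ∈ Icc (-r) 0, HasDerivWithinAt (fun t => evLM r E t φ)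
      (dvLM r E t φ) (Icc (-r) 0) t := fun φ t ht => φ.2 t ht
  refine gen_ev_contDiff (Z := C1 r E) (E := E) (a := -r) (b := 0) (by linarith)
    (evLM r E) (dvLM r E) (fun t φ => norm_evC_le φ t)
    (fun t φ => norm_dvC_le φ t) hd ?_
  intro φ
  have hle : -r ≤ 0 := by linarith
  have h0 : Continuous (fun t => φ.1.2 (projIcc (-r) 0 hle t)) :=
    φ.1.2.continuous.comp continuous_projIcc
  refine h0.continuousOn.congr fun t ht => ?_
  simp only [dvLM_apply, dvC]
  rw [extFun_of_mem _ ht, projIcc_of_mem hle ht]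

lemma aux_dv_contDiff (t : ℝ) : ContDiff ℝ 1 (fun φ : C1 r E => dvC φ t) :=
  ((dvLM r E t).isLinear.with_bound 1
    (fun φ => by rw [one_mul]; exact norm_dvC_le φ t)).contDiff

lemma aux_single_contDiff {n : ℕ} (ν : Fin n) :
    ContDiff ℝ 1 (fun φ : C1 r ℝ => singleC1 ν φ) := by
  refine (IsLinearMap.with_bound ⟨fun φ ψ => ?_, fun c φ => ?_⟩ ‖sCLM n ν‖ fun φ => ?_).contDiff
  · apply Subtype.ext; apply Prod.ext <;> ext t : 1 <;> exact map_add (sCLM n ν) _ _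
  · apply Subtype.ext; apply Prod.ext <;> ext t : 1 <;> exact map_smul (sCLM n ν) _ _
  · have key : ∀ ψ : C(Icc0 r, ℝ), ‖ψ‖ ≤ ‖φ‖ → ‖CMsingle ν ψ‖ ≤ ‖sCLM n ν‖ * ‖φ‖ := by
      intro ψ hψ
      rw [ContinuousMap.norm_le _ (by positivity)]
      intro t
      refine ((sCLM n ν).le_opNorm _).trans ?_
      gcongr
      exact (ψ.norm_coe_le_norm t).trans hψ
    exact max_le (key _ (norm_fst_le φ.1)) (key _ (norm_snd_le φ.1))

lemma sCLM_apply' {n : ℕ} (ν μ : Fin n) (x : ℝ) : sCLM n ν x μ = if μ = ν then x else 0 := by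
  simp only [sCLM, ContinuousLinearMap.coe_pi']
  split_ifs <;> simp

lemma evC_Ymap {n : ℕ} (ψ : Fin n → C1 r ℝ) (x : Fin n → ℝ) (t : ℝ) (μ : Fin n) :
    evC (Ymap ψ x) t μ = x μ * evC (ψ μ) t := by
  have h : evC (Ymap ψ x) t = ∑ ν, x ν • evC (singleC1 ν (ψ ν)) t := by
    have := map_sum (evLM r (Fin n → ℝ) t) (fun ν => x ν • singleC1 ν (ψ ν)) Finset.univ
    simp only [map_smul] at this
    exact this
  rw [h]
  simp [evC, singleC1, extFun_CMsingle, sCLM_apply']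

lemma dvC_Ymap {n : ℕ} (ψ : Fin n → C1 r ℝ) (x : Fin n → ℝ) (t : ℝ) (μ : Fin n) :
    dvC (Ymap ψ x) t μ = x μ * dvC (ψ μ) t := by
  have h : dvC (Ymap ψ x) t = ∑ ν, x ν • dvC (singleC1 ν (ψ ν)) t := by
    have := map_sum (dvLM r (Fin n → ℝ) t) (fun ν => x ν • singleC1 ν (ψ ν)) Finset.univ
    simp only [map_smul] at this
    exact this
  rw [h]
  simp [dvC, singleC1, extFun_CMsingle, sCLM_apply']

end C1lemmas

namespace Setting

open Metric Topology Filter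

variable {r : ℝ} {n kk : ℕ} {F : Type*} [NormedAddCommGroup F] [NormedSpace ℝ F]
variable (S : Setting r n kk F)

lemma Lof_add (φ ψ : C1 r (Fin n → ℝ)) : S.Lof (φ + ψ) = S.Lof φ + S.Lof ψ :=
  map_add S.L φ.1.1 ψ.1.1

lemma Lof_smul (c : ℝ) (φ : C1 r (Fin n → ℝ)) : S.Lof (c • φ) = c • S.Lof φ :=
  map_smul S.L c φ.1.1

lemma Lof_sub (φ ψ : C1 r (Fin n → ℝ)) : S.Lof (φ - ψ) = S.Lof φ - S.Lof ψ :=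
  map_sub S.L φ.1.1 ψ.1.1

lemma Lof_contDiff : ContDiff ℝ 1 S.Lof := by
  refine (IsLinearMap.with_bound ⟨S.Lof_add, S.Lof_smul⟩ ‖S.L‖ fun φ => ?_).contDiff
  refine (S.L.le_opNorm _).trans ?_
  gcongr
  exact norm_fst_le φ.1

lemma isOpen_LW {W' : Set F} (hW : IsOpen W') : IsOpen {φ : C1 r (Fin n → ℝ) | S.Lof φ ∈ W'} :=
  hW.preimage S.Lof_contDiff.continuous

lemma hat_contDiffOn (hr : 0 < r) : ContDiffOn ℝ 1 S.hat {φ | S.Lof φ ∈ S.W} := by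
  rw [contDiffOn_pi]
  intro k
  have h1 : ContDiffOn ℝ 1 (fun φ : C1 r (Fin n → ℝ) => (φ, -(S.d k (S.Lof φ))))
      {φ | S.Lof φ ∈ S.W} :=
    contDiffOn_id.prodMk (((S.d_smooth k).comp S.Lof_contDiff.contDiffOn (fun φ hφ => hφ)).neg)
  refine (aux_ev_contDiff hr).comp h1 ?_
  intro φ hφ
  have := S.d_mem k _ hφ
  exact ⟨mem_univ _, neg_le_neg this.2, neg_nonpos.2 this.1⟩

lemma isOpen_U (hr : 0 < r) : IsOpen S.U :=
  (S.hat_contDiffOn hr).continuousOn.isOpen_inter_preimage (S.isOpen_LW S.Wopen) S.Vopen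

lemma fmap_contDiffOn (hr : 0 < r) : ContDiffOn ℝ 1 S.fmap S.U :=
  S.g_smooth.comp ((S.hat_contDiffOn hr).mono fun φ hφ => hφ.1) (fun φ hφ => hφ.2)

lemma isOpen_WupJ (J : Finset (Fin kk)) : IsOpen (S.WupJ J) := by
  have e : S.WupJ J = S.W ∩ ⋂ k : Fin kk, {w | w ∈ S.W ∧ (k ∉ J → 0 < S.d k w)} := by
    ext w
    simp only [WupJ, mem_inter_iff, mem_iInter]
    exact ⟨fun h => ⟨h.1, fun k => ⟨h.1, h.2 k⟩⟩, fun h => ⟨h.1, fun k => (h.2 k).2⟩⟩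
  rw [e]
  refine S.Wopen.inter (isOpen_iInter_of_finite fun k => ?_)
  by_cases hk : k ∈ J
  · have : {w | w ∈ S.W ∧ (k ∉ J → 0 < S.d k w)} = S.W := by
      ext w; exact ⟨fun h => h.1, fun h => ⟨h, fun h' => absurd hk h'⟩⟩
    rw [this]; exact S.Wopen
  · have : {w | w ∈ S.W ∧ (k ∉ J → 0 < S.d k w)} = S.W ∩ S.d k ⁻¹' Ioi 0 := by
      ext w; exact ⟨fun h => ⟨h.1, h.2 hk⟩, fun h => ⟨h.1, fun _ => h.2⟩⟩
    rw [this]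
    exact (S.d_smooth k).continuousOn.isOpen_inter_preimage S.Wopen isOpen_Ioi

lemma Ymap_contDiffOn (J : Finset (Fin kk)) (y : Fin n → F → C1 r ℝ)
    (hy_smooth : ∀ ν, ContDiffOn ℝ 1 (y ν) (S.WupJ J)) :
    ContDiffOn ℝ 1 (fun p : C1 r (Fin n → ℝ) × (Fin n → ℝ) =>
      Ymap (fun ν => y ν (S.Lof p.1)) p.2) {p | S.Lof p.1 ∈ S.WupJ J} := by
  refine gen_sum_smul (Z := C1 r (Fin n → ℝ))
    (fun (ν : Fin n) (p : C1 r (Fin n → ℝ) × (Fin n → ℝ)) => p.2 ν)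
    (fun ν p => singleC1 ν (y ν (S.Lof p.1))) _ (fun ν => ?_) (fun ν => ?_)
  · have h3 : ContDiff ℝ 1 (fun p : C1 r (Fin n → ℝ) × (Fin n → ℝ) => p.2 ν) :=
      (contDiff_apply ℝ ℝ ν).comp contDiff_snd
    exact h3.contDiffOn
  · have h1 : ContDiffOn ℝ 1 (fun p : C1 r (Fin n → ℝ) × (Fin n → ℝ) => y ν (S.Lof p.1))
        {p | S.Lof p.1 ∈ S.WupJ J} :=
      (hy_smooth ν).comp (S.Lof_contDiff.comp contDiff_fst).contDiffOn (fun p hp => hp)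
    exact (aux_single_contDiff (r := r) ν).comp_contDiffOn h1

lemma Lof_Ymap (J : Finset (Fin kk)) (y : Fin n → F → C1 r ℝ)
    (hyL : ∀ ν, ∀ w ∈ S.WupJ J, S.L (singleC1 ν (y ν w)).1.1 = 0)
    {w : F} (hw : w ∈ S.WupJ J) (x : Fin n → ℝ) : S.Lof (Ymap (fun ν => y ν w) x) = 0 := by
  let Λ : C1 r (Fin n → ℝ) →ₗ[ℝ] F :=
    { toFun := S.Lof, map_add' := S.Lof_add, map_smul' := S.Lof_smul }
  have h := map_sum Λ (fun ν => x ν • singleC1 ν (y ν w)) Finset.univ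
  simp only [map_smul] at h
  have h2 : ∀ ν, Λ (singleC1 ν (y ν w)) = 0 := fun ν => hyL ν w hw
  simp only [h2, smul_zero, Finset.sum_const_zero] at h
  exact h

end Setting

section genericAdd

variable {Z A : Type*} [NormedAddCommGroup Z] [NormedSpace ℝ Z]
  [NormedAddCommGroup A] [NormedSpace ℝ A]

lemma gen_add (a b : A → Z) (s : Set A) (ha : ContDiffOn ℝ 1 a s) (hb : ContDiffOn ℝ 1 b s) :
    ContDiffOn ℝ 1 (fun p => a p + b p) s := ha.add hb

lemma gen_sub (a b : A → Z) (s : Set A) (ha : ContDiffOn ℝ 1 a s) (hb : ContDiffOn ℝ 1 b s) :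
    ContDiffOn ℝ 1 (fun p => a p - b p) s := ha.sub hb

end genericAdd

namespace Setting

open Metric Topology Filter

section mainLemmas

variable {r : ℝ} {n kk : ℕ} {F : Type*} [NormedAddCommGroup F] [NormedSpace ℝ F]
variable (S : Setting r n kk F)

/-- The map `(χ, x) ↦ χ + Y(Lχ)·x`. -/
def Phi (y : Fin n → F → C1 r ℝ) (p : C1 r (Fin n → ℝ) × (Fin n → ℝ)) : C1 r (Fin n → ℝ) :=
  p.1 + Ymap (fun ν => y ν (S.Lof p.1)) p.2

/-- The domain of `(χ, x) ↦ f(χ + Y(Lχ)·x)`. -/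
def PhiDom (J : Finset (Fin kk)) (y : Fin n → F → C1 r ℝ) :
    Set (C1 r (Fin n → ℝ) × (Fin n → ℝ)) :=
  {p | S.Lof p.1 ∈ S.WupJ J} ∩ S.Phi y ⁻¹' S.U

/-- Points where the fixed point problem is well posed. -/
def goodSet (J : Finset (Fin kk)) (y : Fin n → F → C1 r ℝ) : Set (C1 r (Fin n → ℝ)) :=
  interior {χ | S.Lof χ ∈ S.WupJ J ∧ χ ∈ S.U ∧
    (∀ x ∈ ball (S.fmap χ) 1, (χ, x) ∈ S.PhiDom J y) ∧
    (∀ x ∈ ball (S.fmap χ) 1, ∀ x' ∈ ball (S.fmap χ) 1,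
        ‖S.fmap (S.Phi y (χ, x)) - S.fmap (S.Phi y (χ, x'))‖ ≤ 1 / 2 * ‖x - x'‖) ∧
      ‖S.fmap (S.Phi y (χ, S.fmap χ)) - S.fmap χ‖ ≤ 1 / 4}

variable (J : Finset (Fin kk)) (y : Fin n → F → C1 r ℝ)

lemma isOpen_PW : IsOpen {p : C1 r (Fin n → ℝ) × (Fin n → ℝ) | S.Lof p.1 ∈ S.WupJ J} :=
  (S.isOpen_LW (S.isOpen_WupJ J)).preimage continuous_fst

lemma Phi_contDiffOn (hy_smooth : ∀ ν, ContDiffOn ℝ 1 (y ν) (S.WupJ J)) :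
    ContDiffOn ℝ 1 (S.Phi y) {p | S.Lof p.1 ∈ S.WupJ J} :=
  gen_add (Z := C1 r (Fin n → ℝ)) Prod.fst _ _ contDiff_fst.contDiffOn
    (S.Ymap_contDiffOn J y hy_smooth)

lemma RJ_contDiffOn (hy_smooth : ∀ ν, ContDiffOn ℝ 1 (y ν) (S.WupJ J)) :
    ContDiffOn ℝ 1 (S.RJmap y) {φ | S.Lof φ ∈ S.WupJ J} := by
  have h1 : ContDiffOn ℝ 1 (fun φ : C1 r (Fin n → ℝ) => (φ, -dvC φ 0))
      {φ | S.Lof φ ∈ S.WupJ J} :=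
    contDiffOn_id.prodMk (aux_dv_contDiff 0).neg.contDiffOn
  have h2 := (S.Phi_contDiffOn J y hy_smooth).comp h1 (fun φ hφ => hφ)
  refine h2.congr fun φ _ => ?_
  simp only [RJmap, Function.comp, Phi, map_neg]
  exact sub_eq_add_neg _ _

lemma isOpen_PhiDom (hr : 0 < r) (hy_smooth : ∀ ν, ContDiffOn ℝ 1 (y ν) (S.WupJ J)) :
    IsOpen (S.PhiDom J y) :=
  (S.Phi_contDiffOn J y hy_smooth).continuousOn.isOpen_inter_preimage (S.isOpen_PW J)
    (S.isOpen_U hr)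

lemma T_contDiffOn (hr : 0 < r) (hy_smooth : ∀ ν, ContDiffOn ℝ 1 (y ν) (S.WupJ J)) :
    ContDiffOn ℝ 1 (fun p => S.fmap (S.Phi y p)) (S.PhiDom J y) :=
  (S.fmap_contDiffOn hr).comp ((S.Phi_contDiffOn J y hy_smooth).mono inter_subset_left)
    (fun p hp => hp.2)

lemma Lof_Phi (hyL : ∀ ν, ∀ w ∈ S.WupJ J, S.L (singleC1 ν (y ν w)).1.1 = 0)
    {χ : C1 r (Fin n → ℝ)} (hχ : S.Lof χ ∈ S.WupJ J) (x : Fin n → ℝ) :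
    S.Lof (S.Phi y (χ, x)) = S.Lof χ := by
  rw [Phi, Lof_add, S.Lof_Ymap J y hyL hχ, add_zero]

lemma Lof_RJ (hyL : ∀ ν, ∀ w ∈ S.WupJ J, S.L (singleC1 ν (y ν w)).1.1 = 0)
    {χ : C1 r (Fin n → ℝ)} (hχ : S.Lof χ ∈ S.WupJ J) :
    S.Lof (S.RJmap y χ) = S.Lof χ := by
  rw [RJmap, Lof_sub, S.Lof_Ymap J y hyL hχ, sub_zero]

lemma dvC_Y (hy1 : ∀ ν, ∀ w ∈ S.WupJ J, dvC (y ν w) 0 = 1)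
    {w : F} (hw : w ∈ S.WupJ J) (x : Fin n → ℝ) : dvC (Ymap (fun ν => y ν w) x) 0 = x := by
  funext μ
  rw [dvC_Ymap, hy1 μ w hw, mul_one]

lemma dvC_Phi (hy1 : ∀ ν, ∀ w ∈ S.WupJ J, dvC (y ν w) 0 = 1)
    {χ : C1 r (Fin n → ℝ)} (hχ : S.Lof χ ∈ S.WupJ J) (x : Fin n → ℝ) :
    dvC (S.Phi y (χ, x)) 0 = dvC χ 0 + x := by
  have := map_add (dvLM r (Fin n → ℝ) 0) χ (Ymap (fun ν => y ν (S.Lof χ)) x)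
  simp only [dvLM_apply, S.dvC_Y J y hy1 hχ] at this
  exact this

lemma dvC_RJ (hy1 : ∀ ν, ∀ w ∈ S.WupJ J, dvC (y ν w) 0 = 1)
    {χ : C1 r (Fin n → ℝ)} (hχ : S.Lof χ ∈ S.WupJ J) :
    dvC (S.RJmap y χ) 0 = 0 := by
  have := map_sub (dvLM r (Fin n → ℝ) 0) χ (Ymap (fun ν => y ν (S.Lof χ)) (dvC χ 0))
  simp only [dvLM_apply, S.dvC_Y J y hy1 hχ, sub_self] at this
  exact this

lemma Phi_RJ (hyL : ∀ ν, ∀ w ∈ S.WupJ J, S.L (singleC1 ν (y ν w)).1.1 = 0)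
    {φ : C1 r (Fin n → ℝ)} (hφ : S.Lof φ ∈ S.WupJ J) :
    S.Phi y (S.RJmap y φ, dvC φ 0) = φ := by
  simp only [Phi, S.Lof_RJ J y hyL hφ]
  rw [RJmap, sub_add_cancel]

lemma RJ_Phi (hy1 : ∀ ν, ∀ w ∈ S.WupJ J, dvC (y ν w) 0 = 1)
    (hyL : ∀ ν, ∀ w ∈ S.WupJ J, S.L (singleC1 ν (y ν w)).1.1 = 0)
    {χ : C1 r (Fin n → ℝ)} (hχ : S.Lof χ ∈ S.WupJ J) (h0 : dvC χ 0 = 0) (x : Fin n → ℝ) :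
    S.RJmap y (S.Phi y (χ, x)) = χ := by
  rw [RJmap, S.Lof_Phi J y hyL hχ, S.dvC_Phi J y hy1 hχ, h0, zero_add]
  exact add_sub_cancel_right χ _

lemma hat_Phi (hy0 : ∀ ν, ∀ w ∈ S.WupJ J, evC (y ν w) 0 = 0)
    (hyL : ∀ ν, ∀ w ∈ S.WupJ J, S.L (singleC1 ν (y ν w)).1.1 = 0)
    (hyvan : ∀ ν, ∀ w ∈ S.WupJ J, ∀ k ∉ J, ∀ t ∈ Set.Icc (-r) (-(S.d k w)),
      evC (y ν w) t = 0)
    {χ : C1 r (Fin n → ℝ)} (hχ : S.Lof χ ∈ S.WJ J) (x : Fin n → ℝ) :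
    S.hat (S.Phi y (χ, x)) = S.hat χ := by
  have hW : S.Lof χ ∈ S.WupJ J := ⟨hχ.1, hχ.2.2⟩
  funext k
  simp only [hat, S.Lof_Phi J y hyL hW]
  have h := map_add (evLM r (Fin n → ℝ) (-(S.d k (S.Lof χ)))) χ
    (Ymap (fun ν => y ν (S.Lof χ)) x)
  simp only [evLM_apply] at h
  refine h.trans ?_
  have h0 : evC (Ymap (fun ν => y ν (S.Lof χ)) x) (-(S.d k (S.Lof χ))) = 0 := by
    funext μ
    rw [evC_Ymap]
    by_cases hk : k ∈ J
    · rw [hχ.2.1 k hk, neg_zero, hy0 μ _ hW, mul_zero]; rfl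
    · rw [hyvan μ _ hW k hk _ ⟨neg_le_neg (S.d_mem k _ hχ.1).2, le_rfl⟩, mul_zero]; rfl
  rw [h0, add_zero]

lemma UJ_subset_good (hr : 0 < r) (hy_smooth : ∀ ν, ContDiffOn ℝ 1 (y ν) (S.WupJ J))
    (hy0 : ∀ ν, ∀ w ∈ S.WupJ J, evC (y ν w) 0 = 0)
    (hyL : ∀ ν, ∀ w ∈ S.WupJ J, S.L (singleC1 ν (y ν w)).1.1 = 0)
    (hyvan : ∀ ν, ∀ w ∈ S.WupJ J, ∀ k ∉ J, ∀ t ∈ Set.Icc (-r) (-(S.d k w)),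
      evC (y ν w) t = 0) : S.UJ J ⊆ S.goodSet J y := by
  intro χ hχ
  have hW : S.Lof χ ∈ S.WupJ J := ⟨hχ.2.1, hχ.2.2.2⟩
  have hhat := S.hat_Phi J y hy0 hyL hyvan hχ.2
  have h := aux_good_nhds (fun p => S.fmap (S.Phi y p)) S.fmap (S.PhiDom J y)
    (S.isOpen_PhiDom J y hr hy_smooth) (S.T_contDiffOn J y hr hy_smooth) χ
    ((S.fmap_contDiffOn hr).continuousOn.continuousAt ((S.isOpen_U hr).mem_nhds hχ.1))
    (fun x => ⟨hW, by
      show S.Lof (S.Phi y (χ, x)) ∈ S.W ∧ S.hat (S.Phi y (χ, x)) ∈ S.V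
      rw [hhat, S.Lof_Phi J y hyL hW]; exact hχ.1⟩)
    (fun x => by simp only [fmap, hhat])
  rw [goodSet, mem_interior_iff_mem_nhds]
  filter_upwards [h, (S.isOpen_U hr).mem_nhds hχ.1,
    (S.isOpen_LW (S.isOpen_WupJ J)).mem_nhds hW] with ψ h1 h2 h3
  exact ⟨h3, h2, h1⟩

end mainLemmas

end Setting

variable {r : ℝ} {n kk : ℕ} {F : Type*} [NormedAddCommGroup F] [NormedSpace ℝ F]
  [FiniteDimensional ℝ F]

/-- Theorem 4.7. -/
theorem statement15 (hk : 0 < kk) (hr : 0 < r) (S : Setting r n kk F)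
    (J : Finset (Fin kk)) (hJ : J ≠ Finset.univ) (hUJ : (S.UJ J).Nonempty)
    (y : Fin n → F → C1 r ℝ)
    (hy_smooth : ∀ ν, ContDiffOn ℝ 1 (y ν) (S.WupJ J))
    (hy0 : ∀ ν, ∀ w ∈ S.WupJ J, evC (y ν w) 0 = 0)
    (hy1 : ∀ ν, ∀ w ∈ S.WupJ J, dvC (y ν w) 0 = 1)
    (hyL : ∀ ν, ∀ w ∈ S.WupJ J, S.L (singleC1 ν (y ν w)).1.1 = 0)
    (hyvan : ∀ ν, ∀ w ∈ S.WupJ J, ∀ k ∉ J, ∀ t ∈ Set.Icc (-r) (-(S.d k w)),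
      evC (y ν w) t = 0)
    (hyp : S.HypB ∨ S.HypD1B hk ∨ S.U = S.UJ J) :
    ∃ (N O : Set (C1 r (Fin n → ℝ))) (σ : C1 r (Fin n → ℝ) → C1 r (Fin n → ℝ)),
      IsOpen O ∧ N = S.Xf ∩ O ∧ S.XfJ J ⊆ N ∧
      (∃ O', IsOpen O' ∧ S.RJmap y '' N = (X0sub r n : Set (C1 r (Fin n → ℝ))) ∩ O') ∧
      ContDiffOn ℝ 1 (S.RJmap y) N ∧ Set.InjOn (S.RJmap y) N ∧
      ContDiffOn ℝ 1 σ (S.RJmap y '' N) ∧ Set.InvOn σ (S.RJmap y) N (S.RJmap y '' N) ∧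
      (∀ χ ∈ S.RJmap y '' N, σ χ = χ + Ymap (fun ν => y ν (S.Lof χ)) (S.fmap (σ χ))) ∧
      N = (fun χ => χ + Ymap (fun ν => y ν (S.Lof χ)) (S.fmap (σ χ))) '' (S.RJmap y '' N) ∧
      IsAlmostGraphOver N (X0sub r n : Set (C1 r (Fin n → ℝ))) := by
  have : CompleteSpace (C1 r (Fin n → ℝ)) := aux_complete hr
  have hgood : ∀ χ ∈ S.goodSet J y, S.Lof χ ∈ S.WupJ J ∧ χ ∈ S.U ∧
      (∀ x ∈ Metric.ball (S.fmap χ) 1, (χ, x) ∈ S.PhiDom J y) ∧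
      (∀ x ∈ Metric.ball (S.fmap χ) 1, ∀ x' ∈ Metric.ball (S.fmap χ) 1,
        ‖S.fmap (S.Phi y (χ, x)) - S.fmap (S.Phi y (χ, x'))‖ ≤ 1 / 2 * ‖x - x'‖) ∧
      ‖S.fmap (S.Phi y (χ, S.fmap χ)) - S.fmap χ‖ ≤ 1 / 4 := by
    intro χ hχ
    rw [Setting.goodSet] at hχ
    have h := interior_subset hχ
    exact h
  have hΩ : IsOpen (S.goodSet J y) := isOpen_interior
  obtain ⟨X, hXs, hX⟩ := aux_fixed_smooth (fun p => S.fmap (S.Phi y p)) S.fmap (S.PhiDom J y)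
    (S.goodSet J y) (S.isOpen_PhiDom J y hr hy_smooth) hΩ
    (S.T_contDiffOn J y hr hy_smooth)
    ((S.fmap_contDiffOn hr).continuousOn.mono fun χ hχ => (hgood χ hχ).2.1)
    (fun χ hχ => (hgood χ hχ).2.2.1) (fun χ hχ => (hgood χ hχ).2.2.2.1)
    (fun χ hχ => (hgood χ hχ).2.2.2.2)
  beta_reduce at hX
  have hX' : ∀ χ ∈ S.goodSet J y, S.fmap (S.Phi y (χ, X χ)) = X χ := fun χ hχ => (hX χ hχ).2
  have huniq : ∀ χ ∈ S.goodSet J y, ∀ x ∈ Metric.ball (S.fmap χ) 1,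
      S.fmap (S.Phi y (χ, x)) = x → x = X χ := by
    intro χ hχ x hx hfx
    have h := (hgood χ hχ).2.2.2.1 x hx (X χ) (hX χ hχ).1
    rw [hfx, hX' χ hχ] at h
    have : ‖x - X χ‖ ≤ 0 := by linarith
    exact sub_eq_zero.1 (norm_le_zero_iff.1 this)
  set W' : Set (C1 r (Fin n → ℝ)) := {φ | S.Lof φ ∈ S.WupJ J} with hW'
  have hW'o : IsOpen W' := S.isOpen_LW (S.isOpen_WupJ J)
  have hRc := S.RJ_contDiffOn J y hy_smooth
  set O1 : Set (C1 r (Fin n → ℝ)) := W' ∩ S.RJmap y ⁻¹' S.goodSet J y with hO1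
  have hO1o : IsOpen O1 := hRc.continuousOn.isOpen_inter_preimage hW'o hΩ
  set O : Set (C1 r (Fin n → ℝ)) :=
    O1 ∩ (fun φ => (dvC φ 0, S.fmap (S.RJmap y φ))) ⁻¹' {p | p.1 ∈ Metric.ball p.2 1} with hO
  have hOo : IsOpen O := by
    refine ContinuousOn.isOpen_inter_preimage ?_ hO1o ?_
    · refine (aux_dv_contDiff 0).continuous.continuousOn.prodMk ?_
      exact (S.fmap_contDiffOn hr).continuousOn.comp
        (hRc.continuousOn.mono inter_subset_left) (fun φ hφ => (hgood _ hφ.2).2.1)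
    · exact isOpen_lt (continuous_fst.dist continuous_snd) continuous_const
  set N := S.Xf ∩ O with hN
  -- the inverse
  have hNW : ∀ φ ∈ N, S.Lof φ ∈ S.WupJ J := fun φ hφ => hφ.2.1.1
  have hNΩ : ∀ φ ∈ N, S.RJmap y φ ∈ S.goodSet J y := fun φ hφ => hφ.2.1.2
  have hNX : ∀ φ ∈ N, dvC φ 0 = X (S.RJmap y φ) := by
    intro φ hφ
    refine huniq _ (hNΩ φ hφ) _ hφ.2.2 ?_
    rw [S.Phi_RJ J y hyL (hNW φ hφ)]
    exact hφ.1.2.symm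
  have hleft : ∀ φ ∈ N, S.Phi y (S.RJmap y φ, X (S.RJmap y φ)) = φ := by
    intro φ hφ
    rw [← hNX φ hφ, S.Phi_RJ J y hyL (hNW φ hφ)]
  have himg : S.RJmap y '' N = (X0sub r n : Set (C1 r (Fin n → ℝ))) ∩ S.goodSet J y := by
    ext χ
    constructor
    · rintro ⟨φ, hφ, rfl⟩
      exact ⟨S.dvC_RJ J y hy1 (hNW φ hφ), hNΩ φ hφ⟩
    · rintro ⟨h0, hχ⟩
      have h0' : dvC χ 0 = 0 := h0
      have hw := (hgood χ hχ).1
      have hR := S.RJ_Phi J y hy1 hyL hw h0' (X χ)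
      have hd : dvC (S.Phi y (χ, X χ)) 0 = X χ := by
        rw [S.dvC_Phi J y hy1 hw, h0', zero_add]
      refine ⟨S.Phi y (χ, X χ), ⟨⟨?_, ?_⟩, ⟨?_, ?_⟩, ?_⟩, hR⟩
      · exact ((hgood χ hχ).2.2.1 _ (hX χ hχ).1).2
      · rw [hd, hX' χ hχ]
      · show S.Lof (S.Phi y (χ, X χ)) ∈ S.WupJ J
        rw [S.Lof_Phi J y hyL hw]; exact hw
      · show S.RJmap y (S.Phi y (χ, X χ)) ∈ S.goodSet J y
        rw [hR]; exact hχ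
      · show dvC (S.Phi y (χ, X χ)) 0 ∈ Metric.ball (S.fmap (S.RJmap y (S.Phi y (χ, X χ)))) 1
        rw [hR, hd]; exact (hX χ hχ).1
  have hinv : Set.InvOn (fun χ => S.Phi y (χ, X χ)) (S.RJmap y) N (S.RJmap y '' N) := by
    refine ⟨hleft, ?_⟩
    rintro _ ⟨φ, hφ, rfl⟩
    show S.RJmap y (S.Phi y _) = _
    rw [hleft φ hφ]
  have hRN : ContDiffOn ℝ 1 (S.RJmap y) N := hRc.mono hNW
  have hpair : ContDiffOn ℝ 1 (fun χ => (χ, X χ)) (S.goodSet J y) := contDiffOn_id.prodMk hXs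
  have himgΩ : S.RJmap y '' N ⊆ S.goodSet J y := by rw [himg]; exact inter_subset_right
  have hσ : ContDiffOn ℝ 1 (fun χ => S.Phi y (χ, X χ)) (S.RJmap y '' N) :=
    ((S.Phi_contDiffOn J y hy_smooth).comp hpair (fun χ hχ => (hgood χ hχ).1)).mono himgΩ
  have hα : ContDiffOn ℝ 1 (fun χ => Ymap (fun ν => y ν (S.Lof χ)) (X χ)) (S.RJmap y '' N) :=
    ((S.Ymap_contDiffOn J y hy_smooth).comp hpair (fun χ hχ => (hgood χ hχ).1)).mono himgΩ
  have hform : ∀ χ ∈ S.RJmap y '' N, S.Phi y (χ, X χ) =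
      χ + Ymap (fun ν => y ν (S.Lof χ)) (S.fmap (S.Phi y (χ, X χ))) := by
    intro χ hχ
    rw [hX' χ (himgΩ hχ)]; rfl
  have hσimg : (fun χ => S.Phi y (χ, X χ)) '' (S.RJmap y '' N) = N := by
    rw [image_image]
    ext φ
    constructor
    · rintro ⟨ψ, hψ, rfl⟩
      beta_reduce
      rw [hleft ψ hψ]; exact hψ
    · intro hφ
      exact ⟨φ, hφ, hleft φ hφ⟩
  refine ⟨N, O, fun χ => S.Phi y (χ, X χ), hOo, rfl, ?_, ⟨_, hΩ, himg⟩, hRN,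
    hinv.1.injOn, hσ, hinv, hform, ?_, ?_⟩
  · rintro φ ⟨hφ, hφJ⟩
    have hw : S.Lof φ ∈ S.WupJ J := ⟨hφJ.2.1, hφJ.2.2.2⟩
    have hLR := S.Lof_RJ J y hyL hw
    have hRW : S.Lof (S.RJmap y φ) ∈ S.WJ J := by rw [hLR]; exact hφJ.2
    have hhat : S.hat (S.RJmap y φ) = S.hat φ := by
      rw [← S.hat_Phi J y hy0 hyL hyvan hRW (dvC φ 0), S.Phi_RJ J y hyL hw]
    have hRUJ : S.RJmap y φ ∈ S.UJ J := by
      refine ⟨⟨hRW.1, ?_⟩, hRW⟩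
      rw [hhat]; exact hφ.1.2
    refine ⟨hφ, ⟨hw, S.UJ_subset_good J y hr hy_smooth hy0 hyL hyvan hRUJ⟩, ?_⟩
    show dvC φ 0 ∈ Metric.ball (S.fmap (S.RJmap y φ)) 1
    have : S.fmap (S.RJmap y φ) = dvC φ 0 := by
      rw [hφ.2]; simp only [Setting.fmap, hhat]
    rw [this]; exact Metric.mem_ball_self one_pos
  · refine Eq.trans hσimg.symm ?_
    exact image_congr hform
  · refine ⟨S.RJmap y '' N, fun χ => Ymap (fun ν => y ν (S.Lof χ)) (X χ), ?_, hα, ?_, ?_,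
      hσ, ?_, hσimg, S.RJmap y, hRN, hinv.symm⟩
    · rw [himg]; exact inter_subset_left
    · rintro ζ ⟨hζ, hζN⟩
      have h0 : dvC ζ 0 = 0 := (himg ▸ hζ).1
      have hR : S.RJmap y ζ = ζ := by rw [Setting.RJmap, h0, map_zero, sub_zero]
      have hX0 : X ζ = 0 := by
        have := hNX ζ hζN
        rw [hR, h0] at this
        exact this.symm
      beta_reduce
      rw [hX0, map_zero]
    · rintro ζ ⟨hζ, hζN⟩ hα0
      have h1 : dvC (Ymap (fun ν => y ν (S.Lof ζ)) (X ζ)) 0 = 0 := hα0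
      rw [S.dvC_Y J y hy1 (hgood ζ (himgΩ hζ)).1] at h1
      apply hζN
      rw [← hσimg]
      refine ⟨ζ, hζ, ?_⟩
      simp only [Setting.Phi, h1, map_zero, add_zero]
    · exact hinv.2.injOn
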